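/- For every real b > 0, every s ∈ ℝ, and every complex z with −(b + b^{-1}) < Im z < 0, the eigenfunctions for parameters s and −s coincide: e_b(s + z + c_b) · e_b(s − z − c_b)^{-1} · e^{−2πi(z + c_b)s} = e_b(−s + z + c_b) · e_b(−s − z − c_b)^{-1} · e^{+2πi(z + c_b)s}; that is, φ_s(z) = φ_{−s}(z). -/

import Mathlib

/-!
Write `x = z + c_b`, so that `|Im x| < (b + b⁻¹) / 2`. Moving the inverses to the other side, the
claim compares `e_b(s + x) e_b(-s - x)` with `e_b(-s + x) e_b(s - x)`; by the inversion relation the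
quotient should be `exp (iπ (s + x)² - iπ (x - s)²) = exp (4πi x s)`. Only this quotient matters, so
the quadratic exponent and the constant of the inversion relation are never computed:
`qdl_log_inversion` evaluates the corresponding combination of the four contour integrals directly.

The combined integrand is `4 sinh (2ixw) sinh (2isw) / (sinh (wb) sinh (w/b) w)`, an odd function
with one pole in the strip `|Im w| < 2ε`, a simple one at `0` with residue `-16 x s`. Subtracting
`-16 x s · a / sinh (aw)` with `a = π / (2ε)` leaves an odd holomorphic function decaying at both
ends of the strip, whose integral over `ℝ + iε` vanishes by shifting the contour to `ℝ`
(`integral_line_eq_zero_of_odd`). The subtracted term is explicit: on `ℝ + iε` it is a multiple of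
`a / cosh (at)`, whose integral over `ℝ` is `π` (`integrable_and_integral_inv_sinh`). The bounds on
`|sinh|` that give the decay also provide the integrability needed to split the integral.
-/

noncomputable section
open Complex MeasureTheory Filter Topology

/-- The integrand of the contour-integral definition of the non-compact quantum
dilogarithm: `w ↦ exp (-2 i z w) / (sinh (w b) * sinh (w / b) * w)`. -/
def qdlIntegrand (b z w : ℂ) : ℂ :=
  Complex.exp (-2 * Complex.I * z * w) / (Complex.sinh (w * b) * Complex.sinh (w / b) * w)

/-- The non-compact quantum dilogarithm `e_b(z)`, defined by the contour integral over the
horizontal line `ℝ + iε`, with the canonical admissible choice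
`ε = (π/2) * min (Re b) (Re b⁻¹)` (the integral is independent of such `ε`). -/
def qdl (b z : ℂ) : ℂ :=
  Complex.exp ((1 / 4) *
    ∫ t : ℝ, qdlIntegrand b z ((t : ℂ) + ((Real.pi / 2 * min b.re (1 / b).re : ℝ) : ℂ) * Complex.I))

/-- `c_b = i (b + b⁻¹) / 2`. -/
def qdlCb (b : ℂ) : ℂ := Complex.I * (b + b⁻¹) / 2

/-- The Dehn-twist eigenfunction
`φ_s(z) = e_b(s + z + c_b) · e_b(s − z − c_b)⁻¹ · e^{−2πi(z + c_b)s}`. -/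
def qdlPhi (b : ℝ) (s : ℝ) (z : ℂ) : ℂ :=
  qdl (b : ℂ) ((s : ℂ) + z + qdlCb (b : ℂ)) * (qdl (b : ℂ) ((s : ℂ) - z - qdlCb (b : ℂ)))⁻¹ *
    Complex.exp (-2 * (Real.pi : ℂ) * Complex.I * (z + qdlCb (b : ℂ)) * (s : ℂ))

/-! ### The entire function `sinh w / w` -/

/-- `sinh w / w`, extended by its limit `1` at `w = 0` to an entire function. -/
def qdlSinhc (w : ℂ) : ℂ := dslope Complex.sinh 0 w

lemma mul_qdlSinhc (w : ℂ) : w * qdlSinhc w = Complex.sinh w := by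
  have := sub_smul_dslope Complex.sinh 0 w
  simpa [qdlSinhc] using this

lemma qdlSinhc_zero : qdlSinhc 0 = 1 := by
  simp [qdlSinhc]

lemma qdlSinhc_neg (w : ℂ) : qdlSinhc (-w) = qdlSinhc w := by
  rcases eq_or_ne w 0 with rfl | hw
  · simp
  · have h1 := mul_qdlSinhc w
    have h2 := mul_qdlSinhc (-w)
    rw [Complex.sinh_neg] at h2
    apply mul_left_cancel₀ hw
    linear_combination -h1 - h2

lemma differentiable_qdlSinhc : Differentiable ℂ qdlSinhc := by
  have h := (Complex.differentiableOn_dslope (f := Complex.sinh) (c := 0) (s := Set.univ)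
    Filter.univ_mem).2 Complex.differentiable_sinh.differentiableOn
  exact differentiableOn_univ.1 h

lemma sinh_abs_re_le_norm_sinh (w : ℂ) : Real.sinh |w.re| ≤ ‖Complex.sinh w‖ := by
  have h1 : ‖Complex.exp w‖ - ‖Complex.exp (-w)‖ ≤ ‖Complex.exp w - Complex.exp (-w)‖ :=
    norm_sub_norm_le _ _
  have h2 : ‖Complex.exp (-w)‖ - ‖Complex.exp w‖ ≤ ‖Complex.exp w - Complex.exp (-w)‖ := by
    rw [norm_sub_rev]; exact norm_sub_norm_le _ _
  have h3 : ‖Complex.sinh w‖ = ‖Complex.exp w - Complex.exp (-w)‖ / 2 := by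
    rw [Complex.sinh, norm_div]; simp
  rw [Complex.norm_exp, Complex.norm_exp, Complex.neg_re] at h1 h2
  rw [h3, Real.sinh_eq]
  rcases abs_cases w.re with ⟨h, _⟩ | ⟨h, _⟩ <;> rw [h]
  · linarith
  · rw [neg_neg]; linarith

lemma sinh_ne_zero_of_abs_im_lt {w : ℂ} (hw : w ≠ 0) (him : |w.im| < Real.pi) :
    Complex.sinh w ≠ 0 := by
  intro h
  have h1 := sinh_abs_re_le_norm_sinh w
  rw [h, norm_zero, Real.sinh_nonpos_iff] at h1
  have hre : w.re = 0 := abs_eq_zero.1 (le_antisymm h1 (abs_nonneg _))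
  have hwi : w = (w.im : ℂ) * I := by
    apply Complex.ext <;> simp [hre]
  rw [hwi, Complex.sinh_mul_I] at h
  have h2 : Complex.sin (w.im : ℂ) = 0 := by simpa using h
  have h3 : Real.sin w.im = 0 := by exact_mod_cast h2
  rw [abs_lt] at him
  have h4 := (Real.sin_eq_zero_iff_of_lt_of_lt him.1 him.2).1 h3
  apply hw; rw [hwi, h4]; simp

lemma qdlSinhc_ne_zero {w : ℂ} (him : |w.im| < Real.pi) : qdlSinhc w ≠ 0 := by
  rcases eq_or_ne w 0 with rfl | hw
  · simp [qdlSinhc_zero]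
  · intro h
    apply sinh_ne_zero_of_abs_im_lt hw him
    rw [← mul_qdlSinhc, h, mul_zero]

/-! ### Exponential decay in horizontal strips -/

/-- Exponential decay of `g` at both ends of the horizontal strip `|Im w| ≤ ε`. -/
def StripDecay (ε : ℝ) (g : ℂ → ℂ) : Prop :=
  ∃ C δ : ℝ, 0 ≤ C ∧ 0 < δ ∧ ∀ w : ℂ, |w.im| ≤ ε → 1 ≤ |w.re| →
    ‖g w‖ ≤ C * Real.exp (-δ * |w.re|)

lemma StripDecay.add {ε : ℝ} {f g : ℂ → ℂ} (hf : StripDecay ε f) (hg : StripDecay ε g) :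
    StripDecay ε (fun w => f w + g w) := by
  obtain ⟨C, δ, hC, hδ, h⟩ := hf
  obtain ⟨D, η, hD, hη, k⟩ := hg
  refine ⟨C + D, min δ η, by positivity, lt_min hδ hη, fun w h1 h2 => ?_⟩
  have e1 : Real.exp (-δ * |w.re|) ≤ Real.exp (-(min δ η) * |w.re|) := by
    gcongr; exact min_le_left _ _
  have e2 : Real.exp (-η * |w.re|) ≤ Real.exp (-(min δ η) * |w.re|) := by
    gcongr; exact min_le_right _ _
  calc ‖f w + g w‖ ≤ ‖f w‖ + ‖g w‖ := norm_add_le _ _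
    _ ≤ C * Real.exp (-δ * |w.re|) + D * Real.exp (-η * |w.re|) := add_le_add (h w h1 h2) (k w h1 h2)
    _ ≤ C * Real.exp (-(min δ η) * |w.re|) + D * Real.exp (-(min δ η) * |w.re|) := by gcongr
    _ = _ := by ring

lemma StripDecay.const_mul {ε : ℝ} {f : ℂ → ℂ} (hf : StripDecay ε f) (c : ℂ) :
    StripDecay ε (fun w => c * f w) := by
  obtain ⟨C, δ, hC, hδ, h⟩ := hf
  refine ⟨‖c‖ * C, δ, by positivity, hδ, fun w h1 h2 => ?_⟩
  rw [norm_mul, mul_assoc]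
  gcongr
  exact h w h1 h2

lemma StripDecay.sub {ε : ℝ} {f g : ℂ → ℂ} (hf : StripDecay ε f) (hg : StripDecay ε g) :
    StripDecay ε (fun w => f w - g w) := by
  simpa [sub_eq_add_neg] using hf.add (hg.const_mul (-1))

/-- The value at `0` is irrelevant to decay, so a removable singularity there may be filled in. -/
lemma StripDecay.congr {ε : ℝ} {f g : ℂ → ℂ} (hf : StripDecay ε f)
    (h : ∀ w, w ≠ 0 → g w = f w) : StripDecay ε g := by
  obtain ⟨C, δ, hC, hδ, hb⟩ := hf
  refine ⟨C, δ, hC, hδ, fun w h1 h2 => ?_⟩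
  rw [h w (by rintro rfl; norm_num at h2)]
  exact hb w h1 h2

lemma StripDecay.integrable_line {ε : ℝ} (hε : 0 < ε) {f : ℂ → ℂ} (hf : StripDecay ε f)
    (hc : Continuous fun t : ℝ => f ((t : ℂ) + (ε : ℂ) * I)) :
    Integrable fun t : ℝ => f ((t : ℂ) + (ε : ℂ) * I) := by
  obtain ⟨C, δ, hC, hδ, h⟩ := hf
  have hb : ∀ t : ℝ, 1 ≤ |t| →
      ‖f ((t : ℂ) + (ε : ℂ) * I)‖ ≤ C * ‖Real.exp (-δ * |t|)‖ := fun t ht => by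
    have := h ((t : ℂ) + (ε : ℂ) * I) (by simp [abs_of_pos hε]) (by simpa using ht)
    simpa using this
  refine hc.locallyIntegrable.integrable_of_isBigO_atBot_atTop
    (g := fun t : ℝ => Real.exp (-δ * |t|)) (g' := fun t : ℝ => Real.exp (-δ * |t|)) ?_ ?_ ?_ ?_
  · refine Asymptotics.IsBigO.of_bound C ?_
    filter_upwards [Filter.eventually_le_atBot (-1 : ℝ)] with t ht
    exact hb t (by rw [abs_of_nonpos (by linarith)]; linarith)
  · refine ⟨Set.Iic 0, Filter.Iic_mem_atBot 0, ?_⟩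
    refine (integrableOn_exp_mul_Iic hδ 0).congr_fun (fun t ht => ?_) measurableSet_Iic
    simp only [Set.mem_Iic] at ht
    simp [abs_of_nonpos ht]
  · refine Asymptotics.IsBigO.of_bound C ?_
    filter_upwards [Filter.eventually_ge_atTop (1 : ℝ)] with t ht
    exact hb t (by rw [abs_of_nonneg (by linarith)]; linarith)
  · refine ⟨Set.Ioi 0, Filter.Ioi_mem_atTop 0, ?_⟩
    refine (integrableOn_exp_mul_Ioi (neg_lt_zero.2 hδ) 0).congr_fun (fun t ht => ?_)
      measurableSet_Ioi
    simp only [Set.mem_Ioi] at ht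
    simp [abs_of_pos ht]

lemma exp_le_mul_sinh {b t : ℝ} (hb : 0 < b) (ht : 1 ≤ t) :
    (1 - Real.exp (-2 * b)) / 2 * Real.exp (b * t) ≤ Real.sinh (b * t) := by
  rw [Real.sinh_eq]
  have h1 : Real.exp (-(b * t)) = Real.exp (-2 * (b * t)) * Real.exp (b * t) := by
    rw [← Real.exp_add]; ring_nf
  have h2 : Real.exp (-2 * (b * t)) ≤ Real.exp (-2 * b) := by
    apply Real.exp_le_exp.2; nlinarith
  have h3 := mul_le_mul_of_nonneg_right h2 (Real.exp_pos (b * t)).le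
  linarith

/-- `1 / sinh (w b)` decays at the rate `exp (-b |Re w|)`, uniformly in `Im w`. -/
lemma exists_norm_sinh_lower {b : ℝ} (hb : 0 < b) :
    ∃ c : ℝ, 0 < c ∧ ∀ w : ℂ, 1 ≤ |w.re| →
      c * Real.exp (b * |w.re|) ≤ ‖Complex.sinh (w * b)‖ := by
  refine ⟨(1 - Real.exp (-2 * b)) / 2, ?_, fun w hw => ?_⟩
  · have : Real.exp (-2 * b) < 1 := by
      rw [← Real.exp_zero]; exact Real.exp_lt_exp.2 (by linarith)
    linarith
  · refine (exp_le_mul_sinh hb hw).trans ?_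
    have := sinh_abs_re_le_norm_sinh (w * b)
    rwa [Complex.re_mul_ofReal, abs_mul, abs_of_pos hb, mul_comm] at this

lemma stripDecay_inv_sinh (ε : ℝ) {a : ℝ} (ha : 0 < a) :
    StripDecay ε (fun w => (a : ℂ) / Complex.sinh (w * a)) := by
  obtain ⟨c, hc, h⟩ := exists_norm_sinh_lower ha
  refine ⟨a / c, a, by positivity, ha, fun w _ hw => ?_⟩
  rw [norm_div, Complex.norm_real, Real.norm_of_nonneg ha.le]
  calc a / ‖Complex.sinh (w * a)‖ ≤ a / (c * Real.exp (a * |w.re|)) := by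
        gcongr; exact h w hw
    _ = _ := by rw [neg_mul, Real.exp_neg]; field_simp

lemma stripDecay_qdlIntegrand {b ε : ℝ} (hb : 0 < b) {z : ℂ}
    (hz : |z.im| < (b + b⁻¹) / 2) : StripDecay ε (qdlIntegrand b z) := by
  obtain ⟨c, hc, h⟩ := exists_norm_sinh_lower hb
  obtain ⟨d, hd, k⟩ := exists_norm_sinh_lower (inv_pos.2 hb)
  refine ⟨Real.exp (2 * |z.re| * ε) / (c * d), (b + b⁻¹) - 2 * |z.im|, by positivity,
    by linarith, fun w h1 hw => ?_⟩
  have e1 : ‖Complex.exp (-2 * I * z * w)‖ ≤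
      Real.exp (2 * |z.re| * ε) * Real.exp (2 * |z.im| * |w.re|) := by
    rw [Complex.norm_exp, ← Real.exp_add]
    apply Real.exp_le_exp.2
    have : (-2 * I * z * w).re = 2 * (z.re * w.im) + 2 * (z.im * w.re) := by
      simp; ring
    rw [this]
    have a1 : z.re * w.im ≤ |z.re| * ε :=
      (le_abs_self _).trans (by rw [abs_mul]; gcongr)
    have a2 : z.im * w.re ≤ |z.im| * |w.re| := (le_abs_self _).trans (abs_mul _ _).le
    linarith
  have e2 := h w hw
  have e3 := k w hw
  have e4 : (1 : ℝ) ≤ ‖w‖ := hw.trans (Complex.abs_re_le_norm w)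
  have e5 : w / (b : ℂ) = w * ((b⁻¹ : ℝ) : ℂ) := by push_cast; rfl
  rw [qdlIntegrand, norm_div, norm_mul, norm_mul, e5]
  calc _ ≤ Real.exp (2 * |z.re| * ε) * Real.exp (2 * |z.im| * |w.re|) /
        (c * Real.exp (b * |w.re|) * (d * Real.exp (b⁻¹ * |w.re|)) * 1) := by
        gcongr
    _ = _ := by
        have : Real.exp (-(b + b⁻¹ - 2 * |z.im|) * |w.re|) = Real.exp (2 * |z.im| * |w.re|) /
            (Real.exp (b * |w.re|) * Real.exp (b⁻¹ * |w.re|)) := by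
          rw [← Real.exp_add, ← Real.exp_sub]; congr 1; ring
        rw [this]; field_simp

/-! ### Integrals over a horizontal line -/

/-- Contour shift: an odd holomorphic function on a strip that decays at its ends has integral zero
over the line `ℝ + iε`, since its integrals over symmetric real segments vanish. -/
lemma integral_line_eq_zero_of_odd {ε : ℝ} (hε : 0 < ε) {g : ℂ → ℂ}
    (hd : DifferentiableOn ℂ g {w | |w.im| < 2 * ε}) (hodd : ∀ w, g (-w) = -g w)
    (hg : StripDecay ε g) : ∫ t : ℝ, g ((t : ℂ) + (ε : ℂ) * I) = 0 := by
  have hmaps : ∀ t : ℝ, ((t : ℂ) + (ε : ℂ) * I) ∈ {w : ℂ | |w.im| < 2 * ε} := fun t => by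
    simp [abs_of_pos hε]; linarith
  have hint := hg.integrable_line hε (hd.continuousOn.comp_continuous (by fun_prop) hmaps)
  have hlim := intervalIntegral_tendsto_integral hint tendsto_neg_atTop_atBot tendsto_id
  refine tendsto_nhds_unique hlim ?_
  obtain ⟨C, δ, hC, hδ, hb⟩ := hg
  have hreal : ∀ T : ℝ, ∫ t in (-T)..T, g (t : ℂ) = 0 := fun T => by
    have h1 : ∫ t in (-T)..T, g ((-t : ℝ) : ℂ) = ∫ t in (-T)..T, g (t : ℂ) := by
      rw [intervalIntegral.integral_comp_neg (fun t : ℝ => g (t : ℂ)), neg_neg]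
    simp only [Complex.ofReal_neg, hodd, intervalIntegral.integral_neg] at h1
    linear_combination (-1 / 2 : ℂ) * h1
  -- the two vertical sides of the rectangle are negligible as `|T| → ∞`
  have hside : ∀ T : ℝ, 1 ≤ |T| →
      ‖∫ y in (0 : ℝ)..ε, g ((T : ℂ) + y * I)‖ ≤ C * Real.exp (-δ * |T|) * |ε - 0| := by
    intro T hT
    apply intervalIntegral.norm_integral_le_of_norm_le_const
    intro y hy
    rw [Set.uIoc_of_le hε.le] at hy
    have := hb ((T : ℂ) + y * I) (by simpa [abs_of_pos hy.1] using hy.2) (by simpa using hT)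
    simpa using this
  have hrect : ∀ T : ℝ, ∫ t in (-T)..T, g ((t : ℂ) + (ε : ℂ) * I) =
      I * (∫ y in (0 : ℝ)..ε, g ((T : ℂ) + y * I)) -
        I * ∫ y in (0 : ℝ)..ε, g (((-T : ℝ) : ℂ) + y * I) := by
    intro T
    have := Complex.integral_boundary_rect_eq_zero_of_differentiableOn g
      ((-T : ℝ) : ℂ) ((T : ℂ) + (ε : ℂ) * I) (hd.mono ?_)
    · simp only [Complex.ofReal_re, Complex.ofReal_im, Complex.add_re, Complex.add_im,
        Complex.mul_re, Complex.mul_im, Complex.I_re, Complex.I_im, mul_zero, mul_one, sub_zero,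
        add_zero, zero_add, Complex.ofReal_zero, zero_mul, hreal, smul_eq_mul] at this
      linear_combination -this
    · intro w hw
      have hw2 := (Complex.mem_reProdIm.1 hw).2
      simp [Set.uIcc_of_le hε.le] at hw2
      simp only [Set.mem_ofPred_eq, abs_of_nonneg hw2.1]
      linarith
  rw [tendsto_zero_iff_norm_tendsto_zero]
  have hexp : Tendsto (fun T : ℝ => 2 * (C * Real.exp (-δ * T) * |ε - 0|)) atTop (𝓝 0) := by
    have : Tendsto (fun T : ℝ => Real.exp (-δ * T)) atTop (𝓝 0) :=
      Real.tendsto_exp_atBot.comp (tendsto_id.const_mul_atTop_of_neg (neg_lt_zero.2 hδ))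
    simpa using ((this.const_mul C).mul_const |ε - 0|).const_mul 2
  refine squeeze_zero' (Eventually.of_forall fun _ => norm_nonneg _) ?_ hexp
  filter_upwards [Filter.eventually_ge_atTop (1 : ℝ)] with T hT
  have hTa : |T| = T := abs_of_nonneg (by linarith)
  have s1 := hside T (by rw [hTa]; exact hT)
  have s2 := hside (-T) (by rw [abs_neg, hTa]; exact hT)
  rw [abs_neg] at s2
  rw [hTa] at s1 s2
  simp only [id]
  rw [hrect]
  refine (norm_sub_le _ _).trans ?_
  rw [norm_mul, norm_mul, Complex.norm_I, one_mul, one_mul]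
  linarith

/-- A primitive of the integrand is `2 arctan (exp (a t))`. -/
lemma integral_inv_cosh {a : ℝ} (ha : 0 < a) (hi : Integrable fun t : ℝ => a / Real.cosh (t * a)) :
    ∫ t : ℝ, a / Real.cosh (t * a) = Real.pi := by
  have hder : ∀ t : ℝ, HasDerivAt (fun t : ℝ => 2 * Real.arctan (Real.exp (t * a)))
      (a / Real.cosh (t * a)) t := fun t => by
    have h1 : HasDerivAt (fun t : ℝ => Real.exp (t * a)) (Real.exp (t * a) * (1 * a)) t :=
      ((hasDerivAt_id t).mul_const a).exp
    refine (h1.arctan.const_mul 2).congr_deriv ?_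
    rw [Real.cosh_eq, Real.exp_neg]
    have := Real.exp_pos (t * a)
    field_simp
    ring
  have hbot : Tendsto (fun t : ℝ => 2 * Real.arctan (Real.exp (t * a))) atBot (𝓝 0) := by
    have h : Tendsto (fun t : ℝ => Real.exp (t * a)) atBot (𝓝 0) :=
      Real.tendsto_exp_atBot.comp (tendsto_id.atBot_mul_const ha)
    simpa using ((Real.continuous_arctan.tendsto 0).comp h).const_mul 2
  have htop : Tendsto (fun t : ℝ => 2 * Real.arctan (Real.exp (t * a))) atTop (𝓝 Real.pi) := by
    have h : Tendsto (fun t : ℝ => Real.exp (t * a)) atTop atTop :=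
      Real.tendsto_exp_atTop.comp (tendsto_id.atTop_mul_const ha)
    have h2 : Tendsto Real.arctan atTop (𝓝 (Real.pi / 2)) :=
      Real.tendsto_arctan_atTop.mono_right nhdsWithin_le_nhds
    have := (h2.comp h).const_mul 2
    rwa [mul_div_cancel₀ _ (two_ne_zero' ℝ)] at this
  simpa using integral_of_hasDerivAt_of_tendsto hder hi hbot htop

/-- With `a = π / (2ε)` the line `ℝ + iε` lies a quarter period above the pole `0` of
`a / sinh (a w)`, so that the integrand becomes `a / (i cosh (a t))`. -/
lemma integrable_and_integral_inv_sinh {ε : ℝ} (hε : 0 < ε) :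
    Integrable (fun t : ℝ => ((Real.pi / (2 * ε) : ℝ) : ℂ) /
      Complex.sinh (((t : ℂ) + (ε : ℂ) * I) * ((Real.pi / (2 * ε) : ℝ) : ℂ))) ∧
    ∫ t : ℝ, ((Real.pi / (2 * ε) : ℝ) : ℂ) /
      Complex.sinh (((t : ℂ) + (ε : ℂ) * I) * ((Real.pi / (2 * ε) : ℝ) : ℂ)) =
        -I * Real.pi := by
  have ha : 0 < Real.pi / (2 * ε) := by positivity
  have haε : ε * (Real.pi / (2 * ε)) = Real.pi / 2 := by field_simp
  set a := Real.pi / (2 * ε) with hadef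
  have hpt : ∀ t : ℝ, (a : ℂ) / Complex.sinh (((t : ℂ) + (ε : ℂ) * I) * (a : ℂ)) =
      -I * ((a / Real.cosh (t * a) : ℝ) : ℂ) := fun t => by
    have h1 : ((t : ℂ) + (ε : ℂ) * I) * (a : ℂ) = ((t * a : ℝ) : ℂ) + ((Real.pi / 2 : ℝ) : ℂ) * I := by
      rw [← haε]; push_cast; ring
    rw [h1, Complex.sinh_add, Complex.sinh_mul_I, Complex.cosh_mul_I, ← Complex.ofReal_cos,
      ← Complex.ofReal_sin, Real.cos_pi_div_two, Real.sin_pi_div_two, ← Complex.ofReal_cosh]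
    push_cast
    rw [mul_zero, zero_add, one_mul, ← div_div, Complex.div_I]
    ring
  have hcont : Continuous fun t : ℝ => a / Real.cosh (t * a) :=
    continuous_const.div (by fun_prop) fun t => (Real.cosh_pos _).ne'
  have hint := (stripDecay_inv_sinh ε ha).integrable_line hε (by
    simp only [hpt]
    exact continuous_const.mul (Complex.continuous_ofReal.comp hcont))
  refine ⟨hint, ?_⟩
  have hintR : Integrable fun t : ℝ => a / Real.cosh (t * a) := by
    have := (hint.const_mul I).re
    refine this.congr (Eventually.of_forall fun t => ?_)
    simp only [hpt]
    rw [← mul_assoc, mul_neg, Complex.I_mul_I, neg_neg, one_mul]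
    exact Complex.ofReal_re _
  simp only [hpt]
  rw [integral_const_mul, integral_complex_ofReal, integral_inv_cosh ha hintR]

/-! ### The inversion relation -/

/-- The difference of the logarithms of the inversion relations at `s + x` and at `-s + x`. Summed
with these signs the four integrands form an odd function whose singularity at `0` is only a simple
pole, of residue `-16 x s`; its integral over `ℝ + iε` is `-πi` times that residue. -/
lemma qdl_log_inversion {b : ℝ} (hb : 0 < b) {ε : ℝ} (hε : 0 < ε) (hε1 : 2 * ε * b ≤ Real.pi)
    (hε2 : 2 * ε * b⁻¹ ≤ Real.pi) (s : ℝ) (x : ℂ) (hx : |x.im| < (b + b⁻¹) / 2) :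
    (∫ t : ℝ, qdlIntegrand b (s + x) ((t : ℂ) + (ε : ℂ) * I)) +
      (∫ t : ℝ, qdlIntegrand b (-s - x) ((t : ℂ) + (ε : ℂ) * I)) -
      (∫ t : ℝ, qdlIntegrand b (-s + x) ((t : ℂ) + (ε : ℂ) * I)) -
      (∫ t : ℝ, qdlIntegrand b (s - x) ((t : ℂ) + (ε : ℂ) * I)) =
      16 * Real.pi * I * x * s := by
  set a : ℝ := Real.pi / (2 * ε) with hadef
  have ha : 0 < a := by positivity
  have haε : 2 * ε * a = Real.pi := by rw [hadef]; field_simp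
  have hbc : (b : ℂ) ≠ 0 := by exact_mod_cast hb.ne'
  have hdivb : ∀ w : ℂ, w / (b : ℂ) = w * ((b⁻¹ : ℝ) : ℂ) := fun w => by push_cast; rfl
  -- no zero of `sinh (w r)` other than `0` meets the strip `|Im w| < 2ε` when `2εr ≤ π`
  have hstrip : ∀ r : ℝ, 0 < r → 2 * ε * r ≤ Real.pi → ∀ w : ℂ, |w.im| < 2 * ε →
      |(w * (r : ℂ)).im| < Real.pi := fun r hr hr2 w hw => by
    rw [Complex.im_mul_ofReal, abs_mul, abs_of_pos hr]
    exact (mul_lt_mul_of_pos_right hw hr).trans_le hr2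
  -- `F w / w` is the combination of the four integrands minus the multiple of `a / sinh (a w)` with
  -- the same residue at `0`, so `dslope F 0` is the holomorphic extension of that difference.
  let F : ℂ → ℂ := fun w => -16 * x * s *
    (qdlSinhc (2 * I * x * w) * qdlSinhc (2 * I * s * w) /
      (qdlSinhc (w * b) * qdlSinhc (w * ((b⁻¹ : ℝ) : ℂ))) - 1 / qdlSinhc (w * (a : ℂ)))
  have hF0 : F 0 = 0 := by simp [F, qdlSinhc_zero]
  have hFneg : ∀ w, F (-w) = F w := fun w => by
    simp only [F, mul_neg, neg_mul, qdlSinhc_neg]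
  have hFd : DifferentiableOn ℂ F {w | |w.im| < 2 * ε} := by
    have hD : ∀ r : ℂ, DifferentiableOn ℂ (fun w => qdlSinhc (w * r)) {w | |w.im| < 2 * ε} :=
      fun r => (differentiable_qdlSinhc.comp (by fun_prop : Differentiable ℂ fun w => w * r)).differentiableOn
    have hD' : ∀ r : ℂ, DifferentiableOn ℂ (fun w => qdlSinhc (r * w)) {w | |w.im| < 2 * ε} :=
      fun r => (differentiable_qdlSinhc.comp (by fun_prop : Differentiable ℂ fun w => r * w)).differentiableOn
    refine DifferentiableOn.const_mul (DifferentiableOn.sub (((hD' _).mul (hD' _)).div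
      ((hD _).mul (hD _)) fun w hw => mul_ne_zero ?_ ?_) ((differentiableOn_const _).div (hD _)
      fun w hw => ?_)) _
    · exact qdlSinhc_ne_zero (hstrip b hb hε1 w hw)
    · exact qdlSinhc_ne_zero (hstrip _ (inv_pos.2 hb) hε2 w hw)
    · exact qdlSinhc_ne_zero (hstrip a ha haε.le w hw)
  have hopen : IsOpen {w : ℂ | |w.im| < 2 * ε} :=
    isOpen_lt (by fun_prop) continuous_const
  have hgd : DifferentiableOn ℂ (dslope F 0) {w | |w.im| < 2 * ε} :=
    (Complex.differentiableOn_dslope (hopen.mem_nhds (by simpa using hε))).2 hFd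
  have hgodd : ∀ w, dslope F 0 (-w) = -dslope F 0 w := fun w => by
    rcases eq_or_ne w 0 with rfl | hw
    · -- the value of `dslope F 0` at `0` is the derivative of an even function, hence zero
      have h1 := deriv_comp_neg F 0
      simp only [hFneg, neg_zero] at h1
      rw [neg_zero, dslope_same]
      exact h1
    · rw [dslope_of_ne _ hw, dslope_of_ne _ (neg_ne_zero.2 hw), slope_def_field, slope_def_field,
        hFneg, hF0]
      simp [div_neg]
  let G : ℂ → ℂ := fun w => qdlIntegrand b (s + x) w + qdlIntegrand b (-s - x) w -
    qdlIntegrand b (-s + x) w - qdlIntegrand b (s - x) w -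
      -16 * x * s * ((a : ℂ) / Complex.sinh (w * (a : ℂ)))
  have hgG : ∀ w, w ≠ 0 → dslope F 0 w = G w := fun w hw => by
    have hnum : Complex.exp (-2 * I * (s + x) * w) + Complex.exp (-2 * I * (-s - x) * w) -
        Complex.exp (-2 * I * (-s + x) * w) - Complex.exp (-2 * I * (s - x) * w) =
        4 * (Complex.sinh (2 * I * x * w) * Complex.sinh (2 * I * s * w)) := by
      rw [Complex.sinh, Complex.sinh]
      have e1 : -2 * I * (s + x) * w = -(2 * I * x * w) + -(2 * I * s * w) := by ring
      have e2 : -2 * I * (-s - x) * w = 2 * I * x * w + 2 * I * s * w := by ring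
      have e3 : -2 * I * (-s + x) * w = -(2 * I * x * w) + 2 * I * s * w := by ring
      have e4 : -2 * I * (s - x) * w = 2 * I * x * w + -(2 * I * s * w) := by ring
      rw [e1, e2, e3, e4, Complex.exp_add, Complex.exp_add, Complex.exp_add, Complex.exp_add]
      ring
    have hac : (a : ℂ) ≠ 0 := by exact_mod_cast ha.ne'
    rw [dslope_of_ne _ hw, slope_def_field, hF0]
    simp only [G, qdlIntegrand]
    rw [← add_div, ← sub_div, ← sub_div, hnum, hdivb, ← mul_qdlSinhc (2 * I * x * w),
      ← mul_qdlSinhc (2 * I * s * w), ← mul_qdlSinhc (w * b),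
      ← mul_qdlSinhc (w * ((b⁻¹ : ℝ) : ℂ)), ← mul_qdlSinhc (w * (a : ℂ))]
    simp only [F]
    generalize qdlSinhc (w * ((b⁻¹ : ℝ) : ℂ)) = q
    generalize qdlSinhc (w * b) = p
    generalize qdlSinhc (w * (a : ℂ)) = r
    generalize qdlSinhc (2 * I * x * w) = m
    generalize qdlSinhc (2 * I * s * w) = n
    push_cast
    have t1 : 4 * (2 * I * x * w * m * (2 * I * s * w * n)) /
        (w * b * p * (w * (b : ℂ)⁻¹ * q) * w) = -16 * x * s * (m * n / (p * q)) / w := by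
      have : 4 * (2 * I * x * w * m * (2 * I * s * w * n)) = -16 * x * s * (m * n) * w ^ 2 := by
        linear_combination (16 * x * w ^ 2 * m * s * n) * Complex.I_sq
      have h2 : w * b * p * (w * (b : ℂ)⁻¹ * q) * w = (p * q) * w * w ^ 2 := by
        field_simp
      rw [this, h2, mul_div_mul_right _ _ (pow_ne_zero 2 hw), ← div_div]
      ring
    have t2 : (a : ℂ) / (w * a * r) = 1 / r / w := by
      rw [mul_comm w, mul_assoc, ← div_div, div_self hac, div_div, mul_comm]
    rw [t1, t2]
    ring
  have hline0 : ∀ t : ℝ, (t : ℂ) + (ε : ℂ) * I ≠ 0 := fun t h => by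
    have := congrArg Complex.im h
    simp at this
    exact hε.ne' this
  have hdec : ∀ z : ℂ, |z.im| < (b + b⁻¹) / 2 → StripDecay ε (qdlIntegrand b z) :=
    fun z hz => stripDecay_qdlIntegrand hb hz
  have hint : ∀ z : ℂ, |z.im| < (b + b⁻¹) / 2 →
      Integrable fun t : ℝ => qdlIntegrand b z ((t : ℂ) + (ε : ℂ) * I) := fun z hz => by
    refine (hdec z hz).integrable_line hε ?_
    have him : ∀ t : ℝ, |((t : ℂ) + (ε : ℂ) * I).im| < 2 * ε := fun t => by
      simp [abs_of_pos hε]; linarith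
    have hne : ∀ r : ℝ, 0 < r → 2 * ε * r ≤ Real.pi → ∀ t : ℝ,
        Complex.sinh (((t : ℂ) + (ε : ℂ) * I) * (r : ℂ)) ≠ 0 := fun r hr hr2 t =>
      sinh_ne_zero_of_abs_im_lt (mul_ne_zero (hline0 t) (by exact_mod_cast hr.ne'))
        (hstrip r hr hr2 _ (him t))
    simp only [qdlIntegrand, hdivb]
    refine Continuous.div (by fun_prop) (by fun_prop) fun t => ?_
    exact mul_ne_zero (mul_ne_zero (hne b hb hε1 t) (hne _ (inv_pos.2 hb) hε2 t)) (hline0 t)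
  have i1 : |((s : ℂ) + x).im| < (b + b⁻¹) / 2 := by simpa using hx
  have i2 : |(-(s : ℂ) - x).im| < (b + b⁻¹) / 2 := by simpa using hx
  have i3 : |(-(s : ℂ) + x).im| < (b + b⁻¹) / 2 := by simpa using hx
  have i4 : |((s : ℂ) - x).im| < (b + b⁻¹) / 2 := by simpa using hx
  have hGdec : StripDecay ε G :=
    ((((hdec _ i1).add (hdec _ i2)).sub (hdec _ i3)).sub (hdec _ i4)).sub
      ((stripDecay_inv_sinh ε ha).const_mul _)
  have hzero := integral_line_eq_zero_of_odd hε hgd hgodd (hGdec.congr hgG)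
  simp only [hgG _ (hline0 _), G] at hzero
  obtain ⟨hk, hkv⟩ := integrable_and_integral_inv_sinh hε
  rw [← hadef] at hk hkv
  have j2 : Integrable fun t : ℝ => qdlIntegrand b (s + x) ((t : ℂ) + (ε : ℂ) * I) +
      qdlIntegrand b (-s - x) ((t : ℂ) + (ε : ℂ) * I) := (hint _ i1).add (hint _ i2)
  have j3 : Integrable fun t : ℝ => qdlIntegrand b (s + x) ((t : ℂ) + (ε : ℂ) * I) +
      qdlIntegrand b (-s - x) ((t : ℂ) + (ε : ℂ) * I) -
      qdlIntegrand b (-s + x) ((t : ℂ) + (ε : ℂ) * I) := j2.sub (hint _ i3)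
  have j4 : Integrable fun t : ℝ => qdlIntegrand b (s + x) ((t : ℂ) + (ε : ℂ) * I) +
      qdlIntegrand b (-s - x) ((t : ℂ) + (ε : ℂ) * I) -
      qdlIntegrand b (-s + x) ((t : ℂ) + (ε : ℂ) * I) -
      qdlIntegrand b (s - x) ((t : ℂ) + (ε : ℂ) * I) := j3.sub (hint _ i4)
  rw [integral_sub j4 (hk.const_mul _), integral_sub j3 (hint _ i4), integral_sub j2 (hint _ i3),
    integral_add (hint _ i1) (hint _ i2), integral_const_mul, hkv] at hzero
  linear_combination hzero

/-- The eigenfunctions for parameters `s` and `-s` coincide: for `-(b+b⁻¹) < Im z < 0`,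
`e_b(s+z+c_b) e_b(s−z−c_b)⁻¹ e^{−2πi(z+c_b)s}
  = e_b(−s+z+c_b) e_b(−s−z−c_b)⁻¹ e^{2πi(z+c_b)s}`, i.e. `φ_s(z) = φ_{−s}(z)`. -/
theorem qdlPhi_even (b : ℝ) (hb : 0 < b) (s : ℝ) (z : ℂ)
    (h1 : -(b + b⁻¹) < z.im) (h2 : z.im < 0) :
    qdl (b : ℂ) ((s : ℂ) + z + qdlCb (b : ℂ)) * (qdl (b : ℂ) ((s : ℂ) - z - qdlCb (b : ℂ)))⁻¹ *
        Complex.exp (-2 * (Real.pi : ℂ) * Complex.I * (z + qdlCb (b : ℂ)) * (s : ℂ)) =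
      qdl (b : ℂ) (-(s : ℂ) + z + qdlCb (b : ℂ)) *
          (qdl (b : ℂ) (-(s : ℂ) - z - qdlCb (b : ℂ)))⁻¹ *
        Complex.exp (2 * (Real.pi : ℂ) * Complex.I * (z + qdlCb (b : ℂ)) * (s : ℂ)) := by
  have hε : 0 < Real.pi / 2 * min b b⁻¹ :=
    mul_pos (by positivity) (lt_min hb (inv_pos.2 hb))
  -- the height `ε` of the contour satisfies `2εb ≤ π` and `2ε/b ≤ π`
  have hbb : b * b⁻¹ = 1 := mul_inv_cancel₀ hb.ne'
  have hmb : min b b⁻¹ * b ≤ 1 :=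
    (mul_le_mul_of_nonneg_right (min_le_right _ _) hb.le).trans (by linarith)
  have hmb' : min b b⁻¹ * b⁻¹ ≤ 1 :=
    (mul_le_mul_of_nonneg_right (min_le_left _ _) (inv_pos.2 hb).le).trans hbb.le
  have hcb : (qdlCb (b : ℂ)).im = (b + b⁻¹) / 2 := by
    have : qdlCb (b : ℂ) = (((b + b⁻¹) / 2 : ℝ) : ℂ) * I := by
      rw [qdlCb]; push_cast; ring
    rw [this]; simp
  have hx : |(z + qdlCb (b : ℂ)).im| < (b + b⁻¹) / 2 := by
    rw [Complex.add_im, hcb, abs_lt]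
    constructor <;> linarith
  have key := qdl_log_inversion hb hε (by nlinarith [Real.pi_pos]) (by nlinarith [Real.pi_pos])
    s (z + qdlCb (b : ℂ)) hx
  have hre : Real.pi / 2 * min (b : ℂ).re (1 / (b : ℂ)).re = Real.pi / 2 * min b b⁻¹ := by
    rw [one_div, ← Complex.ofReal_inv, Complex.ofReal_re, Complex.ofReal_re]
  simp only [qdl, hre, add_assoc, sub_sub] at key ⊢
  rw [← Complex.exp_neg, ← Complex.exp_neg, ← Complex.exp_add, ← Complex.exp_add,
    ← Complex.exp_add, ← Complex.exp_add]
  -- both sides are single exponentials, and their exponents already agree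
  congr 1
  linear_combination (1 / 4 : ℂ) * key
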